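/- Let μ be the quaternionic Möbius transformation μ(q) = (q − k)⁻¹·(−q − k), defined for quaternions q ≠ k. Then μ maps the six-element set {j, −j, (1/2)j + (√3/2)k, −(1/2)j + (√3/2)k, (1/2)j − (√3/2)k, −(1/2)j − (√3/2)k} bijectively onto the set {i, −i, (2+√3)i, −(2+√3)i, (2−√3)i, −(2−√3)i}, and maps the three-element set {−1, 1/2 + (√3/2)i, 1/2 − (√3/2)i} bijectively onto the set {k, −(√3/2)j − (1/2)k, (√3/2)j − (1/2)k}. In particular, μ(j) = i, μ(−1) = k, μ(1/2 + (√3/2)i) = −(√3/2)j − (1/2)k, and μ((1/2)j + (√3/2)k) = (2+√3)i. -/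

import Mathlib

open Quaternion

/-- The quaternion `i`. -/
def qI : Quaternion ℝ := ⟨0, 1, 0, 0⟩
/-- The quaternion `j`. -/
def qJ : Quaternion ℝ := ⟨0, 0, 1, 0⟩
/-- The quaternion `k`. -/
def qK : Quaternion ℝ := ⟨0, 0, 0, 1⟩

/-- The quaternionic Möbius transformation `μ(q) = (q − k)⁻¹·(−q − k)`. -/
noncomputable def moebiusMu (q : Quaternion ℝ) : Quaternion ℝ := (q - qK)⁻¹ * (-q - qK)

/-- The six triple points of the Fermat cubic. -/
noncomputable def triplePts : Set (Quaternion ℝ) :=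
  {qJ, -qJ, (1 / 2 : ℝ) • qJ + (Real.sqrt 3 / 2 : ℝ) • qK,
    -((1 / 2 : ℝ) • qJ) + (Real.sqrt 3 / 2 : ℝ) • qK,
    (1 / 2 : ℝ) • qJ - (Real.sqrt 3 / 2 : ℝ) • qK,
    -((1 / 2 : ℝ) • qJ) - (Real.sqrt 3 / 2 : ℝ) • qK}

/-- The images of the six triple points. -/
noncomputable def triplePtsImage : Set (Quaternion ℝ) :=
  {qI, -qI, ((2 : ℝ) + Real.sqrt 3) • qI, -(((2 : ℝ) + Real.sqrt 3) • qI),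
    ((2 : ℝ) - Real.sqrt 3) • qI, -(((2 : ℝ) - Real.sqrt 3) • qI)}

/-- The three points of `S⁴` over which the Fermat cubic contains twistor lines. -/
noncomputable def twistorPts : Set (Quaternion ℝ) :=
  {-1, (1 / 2 : ℝ) • (1 : Quaternion ℝ) + (Real.sqrt 3 / 2 : ℝ) • qI,
    (1 / 2 : ℝ) • (1 : Quaternion ℝ) - (Real.sqrt 3 / 2 : ℝ) • qI}

/-- The images of the three twistor-line points. -/
noncomputable def twistorPtsImage : Set (Quaternion ℝ) :=
  {qK, -((Real.sqrt 3 / 2 : ℝ) • qJ) - (1 / 2 : ℝ) • qK,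
    (Real.sqrt 3 / 2 : ℝ) • qJ - (1 / 2 : ℝ) • qK}

/-!
On the unit sphere `S³` one has `μ(w + xi + yj + zk) = (yi − xj − wk) / (1 − z)`: up to an isometry
of the imaginary quaternions, `μ` is stereographic projection from `k`. The six triple points lie
on the unit circle of the `(j, k)`-plane, which passes through the pole and is therefore sent to the
line `ℝi`; the three twistor points lie on the unit circle of the `(1, i)`-plane, which is
equatorial and therefore sent isometrically to the unit circle of the `(j, k)`-plane. Injectivity
away from the pole is visible from `μ(q) = −1 − 2(q − k)⁻¹k`.
-/

section DivisionRing

variable {D : Type*} [DivisionRing D] {a q : D}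

theorem inv_sub_mul_neg_sub (hq : q ≠ a) :
    (q - a)⁻¹ * (-q - a) = -1 - (q - a)⁻¹ * (a + a) := by
  have split : -q - a = -(q - a) - (a + a) := by abel
  rw [split, mul_sub, mul_neg, inv_mul_cancel₀ (sub_ne_zero.2 hq)]

theorem injOn_inv_sub_mul_neg_sub (ha : a + a ≠ 0) :
    Set.InjOn (fun q ↦ (q - a)⁻¹ * (-q - a)) {a}ᶜ := by
  intro p hp q hq h
  simp only [inv_sub_mul_neg_sub hp, inv_sub_mul_neg_sub hq, sub_right_inj] at h
  exact sub_left_injective (inv_injective (mul_right_cancel₀ ha h))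

end DivisionRing

@[simp] theorem qI_re : qI.re = 0 := rfl
@[simp] theorem qI_imI : qI.imI = 1 := rfl
@[simp] theorem qI_imJ : qI.imJ = 0 := rfl
@[simp] theorem qI_imK : qI.imK = 0 := rfl

@[simp] theorem qJ_re : qJ.re = 0 := rfl
@[simp] theorem qJ_imI : qJ.imI = 0 := rfl
@[simp] theorem qJ_imJ : qJ.imJ = 1 := rfl
@[simp] theorem qJ_imK : qJ.imK = 0 := rfl

@[simp] theorem qK_re : qK.re = 0 := rfl
@[simp] theorem qK_imI : qK.imI = 0 := rfl
@[simp] theorem qK_imJ : qK.imJ = 0 := rfl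
@[simp] theorem qK_imK : qK.imK = 1 := rfl

theorem qK_add_qK_ne_zero : qK + qK ≠ 0 := by
  simp [Quaternion.ext_iff]

theorem moebiusMu_injOn : Set.InjOn moebiusMu {qK}ᶜ :=
  injOn_inv_sub_mul_neg_sub qK_add_qK_ne_zero

theorem normSq_sub_qK (q : ℍ[ℝ]) : normSq (q - qK) = normSq q + 1 - 2 * q.imK := by
  simp only [normSq_def', re_sub, imI_sub, imJ_sub, imK_sub, qK_re, qK_imI, qK_imJ, qK_imK]
  ring

-- At `q = qK` both sides vanish, because `0⁻¹ = 0`.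
theorem moebiusMu_eq (q : ℍ[ℝ]) :
    moebiusMu q = (normSq (q - qK))⁻¹ •
      ((1 - normSq q) • 1 + (2 : ℝ) • (q.imJ • qI - q.imI • qJ - q.re • qK)) := by
  rw [moebiusMu, inv_def, smul_mul_assoc]
  congr 1
  ext <;> simp [normSq_def'] <;> ring

theorem moebiusMu_of_normSq_eq_one {q : ℍ[ℝ]} (hq : normSq q = 1) :
    moebiusMu q = (1 - q.imK)⁻¹ • (q.imJ • qI - q.imI • qJ - q.re • qK) := by
  have normSq_sub : normSq (q - qK) = 2 * (1 - q.imK) := by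
    rw [normSq_sub_qK, hq]
    ring
  rw [moebiusMu_eq, normSq_sub, hq, sub_self, zero_smul, zero_add, smul_smul, mul_inv_rev,
    inv_mul_cancel_right₀ two_ne_zero]

section Circles

variable {a b : ℝ}

theorem moebiusMu_smul_qJ_add_smul_qK (h : a ^ 2 + b ^ 2 = 1) :
    moebiusMu (a • qJ + b • qK) = (a / (1 - b)) • qI := by
  rw [moebiusMu_of_normSq_eq_one (by simpa [normSq_def'] using h)]
  ext <;> simp [div_eq_inv_mul]

theorem moebiusMu_smul_one_add_smul_qI (h : a ^ 2 + b ^ 2 = 1) :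
    moebiusMu (a • 1 + b • qI) = -(b • qJ) - a • qK := by
  rw [moebiusMu_of_normSq_eq_one (by simpa [normSq_def'] using h)]
  ext <;> simp

end Circles

theorem half_sq_add_half_sqrt_three_sq : (1 / 2 : ℝ) ^ 2 + (√3 / 2) ^ 2 = 1 := by
  rw [div_pow √3, Real.sq_sqrt zero_le_three]
  norm_num

theorem two_sub_sqrt_three_mul_two_add_sqrt_three : (2 - √3) * (2 + √3) = 1 := by
  linear_combination -Real.sq_sqrt (zero_le_three (α := ℝ))

theorem half_div_one_sub_half_sqrt_three : 1 / 2 / (1 - √3 / 2) = 2 + √3 := by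
  rw [← inv_eq_of_mul_eq_one_right two_sub_sqrt_three_mul_two_add_sqrt_three, div_div,
    one_div, mul_sub, mul_one, mul_div_cancel₀ _ two_ne_zero]

theorem half_div_one_add_half_sqrt_three : 1 / 2 / (1 + √3 / 2) = 2 - √3 := by
  rw [← inv_eq_of_mul_eq_one_left two_sub_sqrt_three_mul_two_add_sqrt_three, div_div,
    one_div, mul_add, mul_one, mul_div_cancel₀ _ two_ne_zero]

theorem moebiusMu_qJ : moebiusMu qJ = qI := by
  simpa using moebiusMu_smul_qJ_add_smul_qK (a := 1) (b := 0) (by norm_num)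

theorem moebiusMu_neg_qJ : moebiusMu (-qJ) = -qI := by
  simpa using moebiusMu_smul_qJ_add_smul_qK (a := -1) (b := 0) (by norm_num)

theorem moebiusMu_half_qJ_add_half_sqrt_three_qK :
    moebiusMu ((1 / 2 : ℝ) • qJ + (√3 / 2) • qK) = (2 + √3) • qI := by
  rw [moebiusMu_smul_qJ_add_smul_qK half_sq_add_half_sqrt_three_sq,
    half_div_one_sub_half_sqrt_three]

theorem moebiusMu_neg_half_qJ_add_half_sqrt_three_qK :
    moebiusMu (-((1 / 2 : ℝ) • qJ) + (√3 / 2) • qK) = -((2 + √3) • qI) := by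
  rw [← neg_smul, moebiusMu_smul_qJ_add_smul_qK (by rw [neg_sq, half_sq_add_half_sqrt_three_sq]),
    neg_div, half_div_one_sub_half_sqrt_three, neg_smul]

theorem moebiusMu_half_qJ_sub_half_sqrt_three_qK :
    moebiusMu ((1 / 2 : ℝ) • qJ - (√3 / 2) • qK) = (2 - √3) • qI := by
  rw [sub_eq_add_neg, ← neg_smul,
    moebiusMu_smul_qJ_add_smul_qK (by rw [neg_sq, half_sq_add_half_sqrt_three_sq]),
    sub_neg_eq_add, half_div_one_add_half_sqrt_three]

theorem moebiusMu_neg_half_qJ_sub_half_sqrt_three_qK :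
    moebiusMu (-((1 / 2 : ℝ) • qJ) - (√3 / 2) • qK) = -((2 - √3) • qI) := by
  rw [sub_eq_add_neg, ← neg_smul, ← neg_smul,
    moebiusMu_smul_qJ_add_smul_qK (by rw [neg_sq, neg_sq, half_sq_add_half_sqrt_three_sq]),
    sub_neg_eq_add, neg_div, half_div_one_add_half_sqrt_three, neg_smul]

theorem moebiusMu_neg_one : moebiusMu (-1) = qK := by
  simpa using moebiusMu_smul_one_add_smul_qI (a := -1) (b := 0) (by norm_num)

theorem moebiusMu_half_add_half_sqrt_three_qI :
    moebiusMu ((1 / 2 : ℝ) • 1 + (√3 / 2) • qI) = -((√3 / 2) • qJ) - (1 / 2 : ℝ) • qK :=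
  moebiusMu_smul_one_add_smul_qI half_sq_add_half_sqrt_three_sq

theorem moebiusMu_half_sub_half_sqrt_three_qI :
    moebiusMu ((1 / 2 : ℝ) • 1 - (√3 / 2) • qI) = (√3 / 2) • qJ - (1 / 2 : ℝ) • qK := by
  rw [sub_eq_add_neg, ← neg_smul,
    moebiusMu_smul_one_add_smul_qI (by rw [neg_sq, half_sq_add_half_sqrt_three_sq]),
    neg_smul, neg_neg]

theorem moebiusMu_image_triplePts : moebiusMu '' triplePts = triplePtsImage := by
  simp only [triplePts, triplePtsImage, Set.image_insert_eq, Set.image_singleton, moebiusMu_qJ,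
    moebiusMu_neg_qJ, moebiusMu_half_qJ_add_half_sqrt_three_qK,
    moebiusMu_neg_half_qJ_add_half_sqrt_three_qK, moebiusMu_half_qJ_sub_half_sqrt_three_qK,
    moebiusMu_neg_half_qJ_sub_half_sqrt_three_qK]

theorem moebiusMu_image_twistorPts : moebiusMu '' twistorPts = twistorPtsImage := by
  simp only [twistorPts, twistorPtsImage, Set.image_insert_eq, Set.image_singleton,
    moebiusMu_neg_one, moebiusMu_half_add_half_sqrt_three_qI, moebiusMu_half_sub_half_sqrt_three_qI]

theorem qK_notMem_triplePts : qK ∉ triplePts := by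
  simp [triplePts, Quaternion.ext_iff]

theorem qK_notMem_twistorPts : qK ∉ twistorPts := by
  simp [twistorPts, Quaternion.ext_iff]

/-- The Möbius transformation `μ(q) = (q−k)⁻¹(−q−k)` maps the six triple points of the
Fermat cubic bijectively onto `{±i, ±(2+√3)i, ±(2−√3)i}`, and maps the three twistor-line
points bijectively onto `{k, −(√3/2)j − (1/2)k, (√3/2)j − (1/2)k}`; moreover `μ(j) = i`,
`μ(−1) = k`, `μ(1/2 + (√3/2)i) = −(√3/2)j − (1/2)k` and `μ((1/2)j + (√3/2)k) = (2+√3)i`. -/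
theorem moebius_maps_special_points :
    (moebiusMu '' triplePts = triplePtsImage ∧ Set.InjOn moebiusMu triplePts) ∧
    (moebiusMu '' twistorPts = twistorPtsImage ∧ Set.InjOn moebiusMu twistorPts) ∧
    moebiusMu qJ = qI ∧
    moebiusMu (-1) = qK ∧
    moebiusMu ((1 / 2 : ℝ) • (1 : Quaternion ℝ) + (Real.sqrt 3 / 2 : ℝ) • qI) =
      -((Real.sqrt 3 / 2 : ℝ) • qJ) - (1 / 2 : ℝ) • qK ∧
    moebiusMu ((1 / 2 : ℝ) • qJ + (Real.sqrt 3 / 2 : ℝ) • qK) = ((2 : ℝ) + Real.sqrt 3) • qI :=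
  ⟨⟨moebiusMu_image_triplePts,
      moebiusMu_injOn.mono (Set.subset_compl_singleton_iff.2 qK_notMem_triplePts)⟩,
    ⟨moebiusMu_image_twistorPts,
      moebiusMu_injOn.mono (Set.subset_compl_singleton_iff.2 qK_notMem_twistorPts)⟩,
    moebiusMu_qJ,
    moebiusMu_neg_one,
    moebiusMu_half_add_half_sqrt_three_qI,
    moebiusMu_half_qJ_add_half_sqrt_three_qK⟩
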